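/- Let R, B, S be finite-valued random variables on a probability space with negative interaction information I(R;B;S) < 0, and let C_RB, C_RS, C_BS be real numbers (causal strengths) satisfying C_RB = I(R;B), C_RS ≥ I(R;S|B), and C_BS ≥ I(B;S|R). If C_RB < |I(R;B;S)| (the root-to-bridge influence is weak), then neither of the other two causal influences is weak: C_RS ≥ |I(R;B;S)| and C_BS ≥ |I(R;B;S)|. -/

import Mathlib

open MeasureTheory

/-- Shannon entropy of a finite-valued random variable `X` under the measure `μ`,
with the convention `0 * log 0 = 0` (note `Real.log 0 = 0` in Mathlib). -/
noncomputable def entropy {Ω α : Type*} [MeasurableSpace Ω] [Fintype α]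
    (μ : Measure Ω) (X : Ω → α) : ℝ :=
  - ∑ x : α, (μ (X ⁻¹' {x})).toReal * Real.log (μ (X ⁻¹' {x})).toReal

/-- Mutual information `I(X;Y) = H(X) + H(Y) - H(X,Y)` of finite-valued random variables. -/
noncomputable def mutualInfo {Ω α β : Type*} [MeasurableSpace Ω] [Fintype α] [Fintype β]
    (μ : Measure Ω) (X : Ω → α) (Y : Ω → β) : ℝ :=
  entropy μ X + entropy μ Y - entropy μ (fun ω => (X ω, Y ω))

/-- Conditional mutual information
`I(X;Y|Z) = H(X,Z) + H(Y,Z) - H(X,Y,Z) - H(Z)` of finite-valued random variables. -/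
noncomputable def condMutualInfo {Ω α β γ : Type*} [MeasurableSpace Ω]
    [Fintype α] [Fintype β] [Fintype γ]
    (μ : Measure Ω) (X : Ω → α) (Y : Ω → β) (Z : Ω → γ) : ℝ :=
  entropy μ (fun ω => (X ω, Z ω)) + entropy μ (fun ω => (Y ω, Z ω))
    - entropy μ (fun ω => (X ω, Y ω, Z ω)) - entropy μ Z

/-- Interaction information `I(X;Y;Z) = I(X;Y) - I(X;Y|Z)`. -/
noncomputable def interactionInfo {Ω α β γ : Type*} [MeasurableSpace Ω]
    [Fintype α] [Fintype β] [Fintype γ]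
    (μ : Measure Ω) (X : Ω → α) (Y : Ω → β) (Z : Ω → γ) : ℝ :=
  mutualInfo μ X Y - condMutualInfo μ X Y Z

/-!
Joint entropy is symmetric, so interaction information is symmetric in its three arguments and
`-I(R;B;S) = I(R;S|B) - I(R;S) = I(B;S|R) - I(B;S)`. Mutual information is nonnegative by Gibbs'
inequality, hence `-I(R;B;S)`, which is `|I(R;B;S)|` when the interaction is negative, is at most
`I(R;S|B)` and at most `I(B;S|R)`.
-/

section Gibbs

open Real

lemma mul_log_le_mul_log_self_add_sub {p q : ℝ} (hp : 0 ≤ p) (hq : 0 ≤ q) (hpq : q = 0 → p = 0) :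
    p * log q ≤ p * log p + (q - p) := by
  rcases hp.eq_or_lt with rfl | hp_pos
  · simpa using hq
  have hq_pos : 0 < q := hq.lt_of_ne' (mt hpq hp_pos.ne')
  have hlog : log q - log p ≤ q / p - 1 := by
    rw [← log_div hq_pos.ne' hp_pos.ne']
    exact log_le_sub_one_of_pos (div_pos hq_pos hp_pos)
  calc p * log q = p * log p + p * (log q - log p) := by ring
    _ ≤ p * log p + p * (q / p - 1) := by gcongr
    _ = p * log p + (q - p) := by field_simp

theorem sum_mul_log_le_sum_mul_log_self {ι : Type*} (s : Finset ι) {p q : ι → ℝ}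
    (hp : ∀ i ∈ s, 0 ≤ p i) (hq : ∀ i ∈ s, 0 ≤ q i) (hpq : ∀ i ∈ s, q i = 0 → p i = 0)
    (hsum : ∑ i ∈ s, q i ≤ ∑ i ∈ s, p i) :
    ∑ i ∈ s, p i * log (q i) ≤ ∑ i ∈ s, p i * log (p i) := by
  have hpointwise : ∑ i ∈ s, p i * log (q i) ≤ ∑ i ∈ s, (p i * log (p i) + (q i - p i)) :=
    Finset.sum_le_sum fun i hi ↦
      mul_log_le_mul_log_self_add_sub (hp i hi) (hq i hi) (hpq i hi)
  rw [Finset.sum_add_distrib, Finset.sum_sub_distrib] at hpointwise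
  linarith

theorem sum_negMulLog_le_add_marginals {α β : Type*} [Fintype α] [Fintype β] {p : α × β → ℝ}
    (hp : ∀ z, 0 ≤ p z) (hsum : ∑ z, p z ≤ 1) :
    ∑ z, negMulLog (p z) ≤
      ∑ x, negMulLog (∑ y, p (x, y)) + ∑ y, negMulLog (∑ x, p (x, y)) := by
  set a : α → ℝ := fun x ↦ ∑ y, p (x, y) with ha
  set b : β → ℝ := fun y ↦ ∑ x, p (x, y) with hb
  have ha_nonneg (x) : 0 ≤ a x := Finset.sum_nonneg fun y _ ↦ hp (x, y)
  have hb_nonneg (y) : 0 ≤ b y := Finset.sum_nonneg fun x _ ↦ hp (x, y)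
  have hpa {x y} (h : a x = 0) : p (x, y) = 0 :=
    (Finset.sum_eq_zero_iff_of_nonneg fun y _ ↦ hp (x, y)).1 h y (Finset.mem_univ y)
  have hpb {x y} (h : b y = 0) : p (x, y) = 0 :=
    (Finset.sum_eq_zero_iff_of_nonneg fun x _ ↦ hp (x, y)).1 h x (Finset.mem_univ x)
  have hprod_le : ∑ z : α × β, a z.1 * b z.2 ≤ ∑ z, p z := by
    calc ∑ z : α × β, a z.1 * b z.2 = (∑ x, a x) * ∑ y, b y := by
          rw [Fintype.sum_prod_type, Finset.sum_mul_sum]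
      _ = (∑ z, p z) * ∑ z, p z := by
          rw [← Fintype.sum_prod_type p, ← Fintype.sum_prod_type_right p]
      _ ≤ ∑ z, p z := mul_le_of_le_one_left (Finset.sum_nonneg fun z _ ↦ hp z) hsum
  have hgibbs : ∑ z : α × β, p z * log (a z.1 * b z.2) ≤ ∑ z, p z * log (p z) :=
    sum_mul_log_le_sum_mul_log_self _ (fun z _ ↦ hp z)
      (fun z _ ↦ mul_nonneg (ha_nonneg z.1) (hb_nonneg z.2))
      (fun z _ h ↦ (mul_eq_zero.1 h).elim hpa hpb) hprod_le
  have hlog_mul (z : α × β) :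
      p z * log (a z.1 * b z.2) = p z * log (a z.1) + p z * log (b z.2) := by
    by_cases hz : p z = 0
    · simp [hz]
    · rw [log_mul (mt hpa hz) (mt hpb hz), mul_add]
  have hcross_a : ∑ z, p z * log (a z.1) = ∑ x, a x * log (a x) := by
    simp only [Fintype.sum_prod_type, ← Finset.sum_mul, ha]
  have hcross_b : ∑ z, p z * log (b z.2) = ∑ y, b y * log (b y) := by
    simp only [Fintype.sum_prod_type_right, ← Finset.sum_mul, hb]
  simp only [hlog_mul, Finset.sum_add_distrib, hcross_a, hcross_b] at hgibbs
  simp only [negMulLog, neg_mul, Finset.sum_neg_distrib]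
  linarith

end Gibbs

section Entropy

variable {Ω α β γ : Type*} [MeasurableSpace Ω] [Fintype α] [Fintype β] [Fintype γ]

lemma entropy_eq_sum_negMulLog (μ : Measure Ω) (X : Ω → α) :
    entropy μ X = ∑ x, Real.negMulLog (μ.real (X ⁻¹' {x})) := by
  simp only [entropy, Real.negMulLog, measureReal_def, neg_mul, Finset.sum_neg_distrib]

lemma entropy_equiv_comp (μ : Measure Ω) (X : Ω → α) (e : α ≃ β) :
    entropy μ (e ∘ X) = entropy μ X := by
  have hfiber (x) : e ∘ X ⁻¹' {e x} = X ⁻¹' {x} := by ext; simp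
  simp only [entropy, ← e.sum_comp, hfiber]

lemma entropy_prod_comm (μ : Measure Ω) (X : Ω → α) (Y : Ω → β) :
    entropy μ (fun ω ↦ (X ω, Y ω)) = entropy μ (fun ω ↦ (Y ω, X ω)) :=
  entropy_equiv_comp μ (fun ω ↦ (Y ω, X ω)) (Equiv.prodComm β α)

lemma entropy_prod_left_comm (μ : Measure Ω) (X : Ω → α) (Y : Ω → β) (Z : Ω → γ) :
    entropy μ (fun ω ↦ (X ω, Y ω, Z ω)) = entropy μ (fun ω ↦ (Y ω, X ω, Z ω)) :=
  entropy_equiv_comp μ (fun ω ↦ (Y ω, X ω, Z ω))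
    ((Equiv.prodAssoc β α γ).symm.trans
      (((Equiv.prodComm β α).prodCongr (Equiv.refl γ)).trans (Equiv.prodAssoc α β γ)))

lemma entropy_prod_right_comm (μ : Measure Ω) (X : Ω → α) (Y : Ω → β) (Z : Ω → γ) :
    entropy μ (fun ω ↦ (X ω, Y ω, Z ω)) = entropy μ (fun ω ↦ (X ω, Z ω, Y ω)) :=
  entropy_equiv_comp μ (fun ω ↦ (X ω, Z ω, Y ω)) ((Equiv.refl α).prodCongr (Equiv.prodComm γ β))

theorem interactionInfo_left_comm (μ : Measure Ω) (X : Ω → α) (Y : Ω → β) (Z : Ω → γ) :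
    interactionInfo μ X Y Z = interactionInfo μ Y X Z := by
  simp only [interactionInfo, mutualInfo, condMutualInfo, entropy_prod_comm μ X Y,
    entropy_prod_left_comm μ X Y Z]
  ring

theorem interactionInfo_right_comm (μ : Measure Ω) (X : Ω → α) (Y : Ω → β) (Z : Ω → γ) :
    interactionInfo μ X Y Z = interactionInfo μ X Z Y := by
  simp only [interactionInfo, mutualInfo, condMutualInfo, entropy_prod_comm μ Y Z,
    entropy_prod_right_comm μ X Y Z]
  ring

end Entropy

section Nonneg

variable {Ω α β γ : Type*} [MeasurableSpace Ω]

lemma sum_measureReal_inter_preimage_singleton [Fintype α] [MeasurableSpace α]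
    [MeasurableSingletonClass α] (μ : Measure Ω) [IsFiniteMeasure μ] {X : Ω → α}
    (hX : Measurable X) (s : Set Ω) :
    ∑ x, μ.real (s ∩ X ⁻¹' {x}) = μ.real s := by
  have hfiber (x) : MeasurableSet (X ⁻¹' {x}) := hX (measurableSet_singleton x)
  simpa [measureReal_restrict_apply, hfiber, Set.inter_comm s] using
    sum_measureReal_preimage_singleton (μ := μ.restrict s) Finset.univ fun x _ ↦ hfiber x

variable [Fintype α] [MeasurableSpace α] [MeasurableSingletonClass α]
  [Fintype β] [MeasurableSpace β] [MeasurableSingletonClass β]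
  (μ : Measure Ω) [IsProbabilityMeasure μ] {X : Ω → α} {Y : Ω → β}

theorem mutualInfo_nonneg (hX : Measurable X) (hY : Measurable Y) : 0 ≤ mutualInfo μ X Y := by
  set p : α × β → ℝ := fun z ↦ μ.real ((fun ω ↦ (X ω, Y ω)) ⁻¹' {z}) with hp
  have hjoint (x y) : p (x, y) = μ.real (X ⁻¹' {x} ∩ Y ⁻¹' {y}) := by
    rw [hp, ← Set.mk_preimage_prod, Set.singleton_prod_singleton]
  have hfst (x) : ∑ y, p (x, y) = μ.real (X ⁻¹' {x}) := by
    simp only [hjoint, sum_measureReal_inter_preimage_singleton μ hY]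
  have hsnd (y) : ∑ x, p (x, y) = μ.real (Y ⁻¹' {y}) := by
    simp only [hjoint, Set.inter_comm (X ⁻¹' _), sum_measureReal_inter_preimage_singleton μ hX]
  have htotal : ∑ z, p z = 1 := by
    simpa using sum_measureReal_inter_preimage_singleton μ (hX.prodMk hY) Set.univ
  have hsubadd := sum_negMulLog_le_add_marginals (p := p) (fun _ ↦ measureReal_nonneg) htotal.le
  simp only [hfst, hsnd] at hsubadd
  simpa only [mutualInfo, entropy_eq_sum_negMulLog, sub_nonneg] using hsubadd

theorem neg_interactionInfo_le_condMutualInfo [Fintype γ] (hX : Measurable X) (hY : Measurable Y)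
    (Z : Ω → γ) : -interactionInfo μ X Y Z ≤ condMutualInfo μ X Y Z := by
  rw [interactionInfo, neg_sub, sub_le_self_iff]
  exact mutualInfo_nonneg μ hX hY

end Nonneg

theorem others_not_weak_of_root_to_bridge_weak_general {Ω α β γ : Type*} [MeasurableSpace Ω]
    [Fintype α] [MeasurableSpace α] [MeasurableSingletonClass α]
    [Fintype β] [MeasurableSpace β] [MeasurableSingletonClass β]
    [Fintype γ] [MeasurableSpace γ] [MeasurableSingletonClass γ]
    (μ : Measure Ω) [IsProbabilityMeasure μ] (R : Ω → α) (B : Ω → β) (S : Ω → γ)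
    (hR : Measurable R) (hB : Measurable B) (hS : Measurable S)
    (hnonpos : interactionInfo μ R B S ≤ 0) (C_RS C_BS : ℝ)
    (hRS : C_RS ≥ condMutualInfo μ R S B) (hBS : C_BS ≥ condMutualInfo μ B S R) :
    C_RS ≥ |interactionInfo μ R B S| ∧ C_BS ≥ |interactionInfo μ R B S| := by
  rw [abs_of_nonpos hnonpos]
  constructor
  · calc -interactionInfo μ R B S = -interactionInfo μ R S B := by
          rw [interactionInfo_right_comm]
      _ ≤ condMutualInfo μ R S B := neg_interactionInfo_le_condMutualInfo μ hR hS B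
      _ ≤ C_RS := hRS
  · calc -interactionInfo μ R B S = -interactionInfo μ B S R := by
          rw [interactionInfo_left_comm, interactionInfo_right_comm]
      _ ≤ condMutualInfo μ B S R := neg_interactionInfo_le_condMutualInfo μ hB hS R
      _ ≤ C_BS := hBS

/-- in a triangle DAG with negative interaction information, if the
root-to-bridge influence is weak, then neither of the other two causal influences
is weak. -/
theorem others_not_weak_of_root_to_bridge_weak {Ω α β γ : Type*} [MeasurableSpace Ω]
    [Fintype α] [MeasurableSpace α] [MeasurableSingletonClass α]
    [Fintype β] [MeasurableSpace β] [MeasurableSingletonClass β]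
    [Fintype γ] [MeasurableSpace γ] [MeasurableSingletonClass γ]
    (μ : MeasureTheory.Measure Ω) [MeasureTheory.IsProbabilityMeasure μ]
    (R : Ω → α) (B : Ω → β) (S : Ω → γ)
    (hR : Measurable R) (hB : Measurable B) (hS : Measurable S)
    (hneg : interactionInfo μ R B S < 0)
    (C_RB C_RS C_BS : ℝ)
    (hRB : C_RB = mutualInfo μ R B)
    (hRS : C_RS ≥ condMutualInfo μ R S B)
    (hBS : C_BS ≥ condMutualInfo μ B S R)
    (hweak : C_RB < |interactionInfo μ R B S|) :
    C_RS ≥ |interactionInfo μ R B S| ∧ C_BS ≥ |interactionInfo μ R B S| :=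
  others_not_weak_of_root_to_bridge_weak_general μ R B S hR hB hS hneg.le C_RS C_BS hRS hBS
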